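/- Let n ≥ 1 be an integer, Ω ⊂ ℝⁿ a bounded open set, T > 0, x₀ ∈ ℝⁿ \ cl(Ω), β ∈ (0,1), and C₀ > 0 such that ψ ≥ 1 on Ω × (−T,T), where ψ(x,t) = |x−x₀|² − βt² + C₀; for λ > 0 set φ = e^{λψ} and □v = ∂ₜ²v − Δv. Define P₁w = ∂ₜ²w − Δw + s²λ²φ²(|∂ₜψ|² − |∇ψ|²)w. Then there exist λ₀ > 0, s₀ > 0 and M > 0 such that for all s ≥ s₀, all λ ≥ λ₀, and every smooth function v : ℝⁿ × ℝ → ℝ with compact support contained in Ω × (−T,T): sλ ∫∫_{Ω×(−T,T)} φ e^{2sφ} (|∂ₜv|² + |∇v|²) dx dt + s³λ³ ∫∫ φ³ e^{2sφ} |v|² dx dt + ∫∫ |P₁(e^{sφ}v)|² dx dt ≤ M ∫∫ e^{2sφ} |□v|² dx dt. -/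

import Mathlib

open MeasureTheory Real Set
open scoped RealInnerProductSpace

/-- The Laplacian of a real-valued function on Euclidean space. -/
noncomputable def lap {n : ℕ} (f : EuclideanSpace ℝ (Fin n) → ℝ) (x : EuclideanSpace ℝ (Fin n)) : ℝ :=
  ∑ i : Fin n, fderiv ℝ (fun y => fderiv ℝ f y (EuclideanSpace.single i 1)) x (EuclideanSpace.single i 1)

/-- The weight `ψ(x,t) = |x - x₀|² - β t² + C₀`. -/
noncomputable def psi {n : ℕ} (x₀ : EuclideanSpace ℝ (Fin n)) (β C₀ : ℝ)
    (x : EuclideanSpace ℝ (Fin n)) (t : ℝ) : ℝ :=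
  ‖x - x₀‖ ^ 2 - β * t ^ 2 + C₀

/-- The Carleman weight `φ = e^{λψ}`. -/
noncomputable def phi {n : ℕ} (x₀ : EuclideanSpace ℝ (Fin n)) (β C₀ l : ℝ)
    (x : EuclideanSpace ℝ (Fin n)) (t : ℝ) : ℝ :=
  Real.exp (l * psi x₀ β C₀ x t)


/-- The operator `P₁w = ∂ₜ²w - Δw + s²λ²φ²(|∂ₜψ|² - |∇ψ|²)w` (formula (2.2)). -/
noncomputable def P1 {n : ℕ} (x₀ : EuclideanSpace ℝ (Fin n)) (β C₀ s l : ℝ)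
    (w : EuclideanSpace ℝ (Fin n) → ℝ → ℝ) (x : EuclideanSpace ℝ (Fin n)) (t : ℝ) : ℝ :=
  deriv (deriv (w x)) t - lap (fun y => w y t) x
    + s ^ 2 * l ^ 2 * (phi x₀ β C₀ l x t) ^ 2 *
      ((deriv (psi x₀ β C₀ x) t) ^ 2 - ‖gradient (fun y => psi x₀ β C₀ y t) x‖ ^ 2) * w x t

/-! ### Calculus in `E × ℝ` -/

namespace Carl

abbrev V (n : ℕ) := EuclideanSpace ℝ (Fin n) × ℝ

/-- Standard directions of `E × ℝ`; `none` is the time direction. -/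
noncomputable def ee {n : ℕ} : Option (Fin n) → V n
  | none => (0, 1)
  | some i => (EuclideanSpace.single i 1, 0)

/-- Shifted coordinates. -/
noncomputable def yy {n : ℕ} (x₀ : EuclideanSpace ℝ (Fin n)) : Option (Fin n) → V n → ℝ
  | none => fun p => p.2
  | some i => fun p => p.1 i - x₀ i

/-- Second-order coefficients of `ψ`. -/
noncomputable def mm {n : ℕ} (β : ℝ) : Option (Fin n) → ℝ
  | none => -β
  | some _ => 1

/-- Lorentzian signs. -/
noncomputable def sg {n : ℕ} : Option (Fin n) → ℝ
  | none => 1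
  | some _ => -1

/-- Directional derivative. -/
noncomputable def D {n : ℕ} (a : Option (Fin n)) (u : V n → ℝ) (p : V n) : ℝ :=
  fderiv ℝ u p (ee a)

abbrev Sm {n : ℕ} (u : V n → ℝ) : Prop := ContDiff ℝ (⊤ : ℕ∞) u

def HD {n : ℕ} (a : Option (Fin n)) (f f' : V n → ℝ) : Prop :=
  ∀ p, HasLineDerivAt ℝ f (f' p) p (ee a)

variable {n : ℕ} {a b : Option (Fin n)} {f g f' g' : V n → ℝ}

lemma Sm.D (hf : Sm f) (a : Option (Fin n)) : Sm (D a f) := by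
  have h : ContDiff ℝ (⊤ : ℕ∞) (fderiv ℝ f) := hf.fderiv_right (by simp)
  exact h.clm_apply contDiff_const

lemma Sm.HD (hf : Sm f) (a : Option (Fin n)) : HD a f (Carl.D a f) := fun p =>
  ((hf.differentiable (by simp)) p).hasFDerivAt.hasLineDerivAt _

lemma HD.D_eq (h : HD a f f') (hf : Sm f) : D a f = f' :=
  funext fun p => (hf.HD a p).unique (h p)

lemma HD.congr (h : HD a f f') (h' : ∀ p, f' p = g' p) : HD a f g' := fun p => h' p ▸ h p

lemma HD.mul (hf : HD a f f') (hg : HD a g g') :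
    HD a (fun p => f p * g p) (fun p => f' p * g p + f p * g' p) := fun p => by
  have h1 : HasDerivAt _ _ _ := hf p
  have h2 : HasDerivAt _ _ _ := hg p
  have h := h1.mul h2
  simp only [zero_smul, add_zero] at h
  exact h

lemma HD.add (hf : HD a f f') (hg : HD a g g') :
    HD a (fun p => f p + g p) (fun p => f' p + g' p) := fun p => by
  have h1 : HasDerivAt _ _ _ := hf p
  have h2 : HasDerivAt _ _ _ := hg p
  exact h1.add h2

lemma HD.sub (hf : HD a f f') (hg : HD a g g') :
    HD a (fun p => f p - g p) (fun p => f' p - g' p) := fun p => by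
  have h1 : HasDerivAt _ _ _ := hf p
  have h2 : HasDerivAt _ _ _ := hg p
  exact h1.sub h2

lemma HD.exp (hf : HD a f f') :
    HD a (fun p => Real.exp (f p)) (fun p => Real.exp (f p) * f' p) := fun p => by
  have h1 : HasDerivAt _ _ _ := hf p
  have h := h1.exp
  simp only [zero_smul, add_zero] at h
  exact h

lemma HD.const (c : ℝ) : HD a (fun _ => c) (fun _ => 0) := fun p => by
  exact hasDerivAt_const (0:ℝ) c

lemma HD.sum {ι : Type*} [Fintype ι] {F F' : ι → V n → ℝ} (h : ∀ i, HD a (F i) (F' i)) :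
    HD a (fun p => ∑ i, F i p) (fun p => ∑ i, F' i p) := fun p => by
  have h1 : ∀ i ∈ (Finset.univ : Finset ι), HasDerivAt _ _ _ := fun i _ => h i p
  exact HasDerivAt.fun_sum h1

lemma D_comm (hf : Sm f) (a b : Option (Fin n)) (p : V n) : D a (D b f) p = D b (D a f) p := by
  have hs : IsSymmSndFDerivAt ℝ f p :=
    hf.contDiffAt.isSymmSndFDerivAt (by simp only [minSmoothness_of_isRCLikeNormedField]; norm_cast)
  have h : DifferentiableAt ℝ (fderiv ℝ f) p := by
    have h : ContDiff ℝ (⊤ : ℕ∞) (fderiv ℝ f) := hf.fderiv_right (by simp)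
    exact (h.differentiable (by simp)) p
  have key : ∀ u w : V n, fderiv ℝ (fun q => fderiv ℝ f q u) p w = fderiv ℝ (fderiv ℝ f) p w u := by
    intro u w
    rw [fderiv_clm_apply h (by fun_prop)]
    simp
  unfold D
  rw [key, key]
  exact hs _ _

lemma sm_yy (x₀ : EuclideanSpace ℝ (Fin n)) (a : Option (Fin n)) : Sm (yy x₀ a) := by
  cases a with
  | none => exact contDiff_snd
  | some i =>
    show ContDiff ℝ (⊤ : ℕ∞) (fun p : V n => p.1 i - x₀ i)
    fun_prop

lemma hd_yy (x₀ : EuclideanSpace ℝ (Fin n)) (a b : Option (Fin n)) :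
    HD a (yy x₀ b) (fun _ => if a = b then 1 else 0) := by
  intro p
  have hid : HasDerivAt (fun t : ℝ => t) 1 0 := hasDerivAt_id 0
  unfold HasLineDerivAt
  cases a with
  | none =>
    cases b with
    | none => simpa [yy, ee] using hid.const_add p.2
    | some j => simpa [yy, ee] using hasDerivAt_const (0:ℝ) _
  | some i =>
    cases b with
    | none => simpa [yy, ee] using hasDerivAt_const (0:ℝ) _
    | some j =>
      by_cases h : i = j
      · subst h
        simpa [yy, ee] using (hid.const_add (p.1 i)).sub_const (x₀ i)
      · have h' : ¬ j = i := fun e => h e.symm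
        simpa [yy, ee, h, h'] using hasDerivAt_const (0:ℝ) _

/-- vanishing off a set, together with derivatives -/
lemma D_zero {K : Set (V n)} (hK : IsClosed K) (h : ∀ p, p ∉ K → f p = 0) (a : Option (Fin n)) :
    ∀ p, p ∉ K → D a f p = 0 := by
  intro p hp
  have : f =ᶠ[nhds p] fun _ => (0:ℝ) := by
    filter_upwards [hK.isOpen_compl.mem_nhds hp] with q hq using h q hq
  unfold D
  rw [this.fderiv_eq]
  simp

lemma integrable_of {K : Set (V n)} (hK : IsCompact K) (hf : Continuous f)
    (h : ∀ p, p ∉ K → f p = 0) : Integrable f := by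
  exact hf.integrable_of_hasCompactSupport (HasCompactSupport.intro hK (fun p hp => h p hp))

lemma int_D {K : Set (V n)} (hK : IsCompact K) (hf : Sm f)
    (h : ∀ p, p ∉ K → f p = 0) (hd : HD a f f') : Integrable f' ∧ ∫ p, f' p = 0 := by
  rw [← hd.D_eq hf]
  have hi : Integrable (D a f) :=
    integrable_of hK (hf.D a).continuous (D_zero hK.isClosed h a)
  have hi0 : Integrable f := integrable_of hK hf.continuous h
  refine ⟨hi, ?_⟩
  have : (volume : Measure (V n)).IsAddHaarMeasure :=
    Measure.prod.instIsAddHaarMeasure volume volume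
  have hi' : Integrable (fun p => fderiv ℝ f p (ee a)) := hi
  have h1 := integral_mul_fderiv_eq_neg_fderiv_mul_of_integrable (μ := (volume : Measure (V n)))
    (f := f) (g := fun _ => (1:ℝ)) (v := ee a)
    (by simpa using hi') (by simp) (by simpa using hi0)
    (fun x _ => (hf.differentiable (by simp)) x) (fun x _ => by fun_prop)
  simpa [D] using h1

lemma ibp1 {K : Set (V n)} (hK : IsCompact K) {w χ χa χb : V n → ℝ} (hw : Sm w)
    (h : ∀ p, p ∉ K → w p = 0) (hχ : Sm χ) (ha : HD a χ χa) (hb : HD b χ χb) :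
    Integrable (fun p => 2 * D a (D a w) p * χ p * D b w p + 2 * D a w p * χa p * D b w p
      - D a w p ^ 2 * χb p) ∧
    ∫ p, (2 * D a (D a w) p * χ p * D b w p + 2 * D a w p * χa p * D b w p
      - D a w p ^ 2 * χb p) = 0 := by
  have hwa := hw.D a
  have hwb := hw.D b
  have z : ∀ p, p ∉ K → D a w p = 0 := D_zero hK.isClosed h a
  have e1 := int_D (a := a) hK (f := fun p => D a w p * (χ p * D b w p))
    (hwa.mul (hχ.mul hwb)) (fun p hp => by simp [z p hp])
    ((hwa.HD a).mul (ha.mul (hwb.HD a)))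
  have e2 := int_D (a := b) hK (f := fun p => D a w p * (D a w p * χ p))
    (hwa.mul (hwa.mul hχ)) (fun p hp => by simp [z p hp])
    ((hwa.HD b).mul ((hwa.HD b).mul hb))
  have e := (e1.1.const_mul 2).sub e2.1
  have e' := integral_sub (e1.1.const_mul 2) e2.1
  rw [integral_const_mul, e1.2, e2.2] at e'
  have c := D_comm hw a b
  constructor
  · refine e.congr (Filter.Eventually.of_forall fun p => ?_)
    simp only [Pi.sub_apply, c p]; ring
  · refine Eq.trans ?_ (e'.trans (by norm_num))
    congr 1; funext p; simp only [c p]; ring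

lemma ibp2 {K : Set (V n)} (hK : IsCompact K) {w B Ba Baa : V n → ℝ} (hw : Sm w)
    (h : ∀ p, p ∉ K → w p = 0) (hB : Sm B) (ha : HD a B Ba) (hBa : Sm Ba) (haa : HD a Ba Baa) :
    Integrable (fun p => D a (D a w) p * B p * w p + B p * D a w p ^ 2
      - 1 / 2 * Baa p * w p ^ 2) ∧
    ∫ p, (D a (D a w) p * B p * w p + B p * D a w p ^ 2
      - 1 / 2 * Baa p * w p ^ 2) = 0 := by
  have hwa := hw.D a
  have e1 := int_D (a := a) hK
    (f := fun p => D a w p * (B p * w p) - (1 / 2 : ℝ) * (Ba p * (w p * w p)))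
    ((hwa.mul (hB.mul hw)).sub (contDiff_const.mul (hBa.mul (hw.mul hw))))
    (fun p hp => by simp [h p hp])
    (((hwa.HD a).mul (ha.mul (hw.HD a))).sub
      ((HD.const _).mul (haa.mul ((hw.HD a).mul (hw.HD a)))))
  constructor
  · refine e1.1.congr (Filter.Eventually.of_forall fun p => ?_)
    simp only; ring
  · refine Eq.trans ?_ e1.2
    congr 1; funext p; ring

lemma ibp3 {K : Set (V n)} (hK : IsCompact K) {w κ κb : V n → ℝ} (hw : Sm w)
    (h : ∀ p, p ∉ K → w p = 0) (hκ : Sm κ) (hb : HD b κ κb) :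
    Integrable (fun p => 2 * κ p * w p * D b w p + κb p * w p ^ 2) ∧
    ∫ p, (2 * κ p * w p * D b w p + κb p * w p ^ 2) = 0 := by
  have e1 := int_D (a := b) hK (f := fun p => κ p * (w p * w p))
    (hκ.mul (hw.mul hw)) (fun p hp => by simp [h p hp]) (hb.mul ((hw.HD b).mul (hw.HD b)))
  constructor
  · refine e1.1.congr (Filter.Eventually.of_forall fun p => ?_)
    simp only; ring
  · refine Eq.trans ?_ e1.2
    congr 1; funext p; ring

/-! ### Pointwise algebra -/

lemma sg_sq (a : Option (Fin n)) : sg a * sg a = 1 := by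
  cases a <;> simp [sg]

lemma mm_sg (β : ℝ) (a : Option (Fin n)) : 4 * mm β a + 2 * (1 + β) * sg a = 2 * (1 - β) := by
  cases a <;> simp [sg, mm] <;> ring

lemma sum_sg_mm (β : ℝ) : ∑ a : Option (Fin n), sg a * (2 * mm β a) = -2 * (n + β) := by
  simp [Fintype.sum_option, sg, mm]; ring

lemma sum_mm_sq (β : ℝ) : ∑ a : Option (Fin n), 8 * mm β a ^ 2 = 8 * (n + β ^ 2) := by
  simp [Fintype.sum_option, mm]; ring

lemma sum_qpsi (β : ℝ) (y : Option (Fin n) → ℝ) :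
    ∑ a, sg a * (8 * sg a * mm β a ^ 2 * y a) * (2 * mm β a * y a) =
      16 * (1 - β) * (∑ i : Fin n, y (some i) ^ 2)
        - 4 * β * ∑ a, 4 * sg a * mm β a ^ 2 * (y a * y a) := by
  simp only [Fintype.sum_option, sg, mm]
  rw [mul_add, ← sub_sub, Finset.mul_sum, Finset.mul_sum, add_comm, ← sub_eq_zero]
  have : ∀ i : Fin n, (-1:ℝ) * (8 * -1 * 1 ^ 2 * y (some i)) * (2 * 1 * y (some i)) =
     16 * (1 - β) * y (some i) ^ 2 - 4 * β * (4 * -1 * 1 ^ 2 * (y (some i) * y (some i))) := by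
    intro i; ring
  simp only [this, Finset.sum_sub_distrib]
  ring

/-- The pointwise identity. -/
lemma alg_id (β s l φ W : ℝ) (y W1 W2 : Option (Fin n) → ℝ) (q G X A P1 Bs r2 : ℝ)
    (hq : q = ∑ a, 4 * sg a * mm β a ^ 2 * (y a * y a))
    (hG : G = ∑ a, sg a * (2 * mm β a * y a) * W1 a)
    (hX : X = ∑ a, W1 a ^ 2)
    (hA : A = l * q - 2 * (n - 1))
    (hr : r2 = ∑ i : Fin n, y (some i) ^ 2)
    (hP1 : P1 = (∑ a, sg a * W2 a) + s ^ 2 * l ^ 2 * φ ^ 2 * q * W)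
    (Baa : Option (Fin n) → ℝ) (hBs : Bs = ∑ a, sg a * Baa a) :
    (∑ a, ∑ b, sg a * sg b * (2 * W2 a * (φ * (2 * mm β b * y b)) * W1 b
        + 2 * W1 a * (l * φ * (2 * mm β a * y a) * (2 * mm β b * y b)
            + φ * (2 * mm β b * (if a = b then 1 else 0))) * W1 b
        - W1 a ^ 2 * (l * φ * (2 * mm β b * y b) * (2 * mm β b * y b) + φ * (2 * mm β b * 1))))
      + (∑ a, sg a * (W2 a * (φ * A) * W + φ * A * W1 a ^ 2 - 1 / 2 * Baa a * W ^ 2))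
      + s ^ 2 * l ^ 2 * (∑ b, sg b * (2 * (φ ^ 3 * q * (2 * mm β b * y b)) * W * W1 b
        + (3 * l * φ ^ 3 * (2 * mm β b * y b) * q * (2 * mm β b * y b)
            + φ ^ 3 * (8 * sg b * mm β b ^ 2 * y b) * (2 * mm β b * y b)
            + φ ^ 3 * q * (2 * mm β b)) * W ^ 2))
    = P1 * φ * (2 * G + A * W) + 2 * (1 - β) * φ * X + 2 * l * φ * G ^ 2
      + s ^ 2 * l ^ 2 * φ ^ 3 * W ^ 2 * (2 * l * q ^ 2 - (2 + 6 * β) * q + 16 * (1 - β) * r2)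
      - 1 / 2 * Bs * W ^ 2 := by
  have hsq := sum_qpsi β y
  rw [← hq, ← hr] at hsq
  have hsm := sum_sg_mm (n := n) β
  have hq2 : q = ∑ a, sg a * (2 * mm β a * y a) ^ 2 := by
    rw [hq]; exact Finset.sum_congr rfl fun a _ => by ring
  set L := ∑ a, sg a * W2 a with hL
  set N := ∑ a, sg a * W1 a ^ 2 with hN
  have hXN : 4 * (∑ a, mm β a * W1 a ^ 2) + 2 * (1 + β) * N = 2 * (1 - β) * X := by
    rw [hN, hX, Finset.mul_sum, Finset.mul_sum, Finset.mul_sum, ← Finset.sum_add_distrib]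
    refine Finset.sum_congr rfl fun a _ => ?_
    linear_combination W1 a ^ 2 * mm_sg β a
  have S1 : (∑ a, ∑ b, sg a * sg b * (2 * W2 a * (φ * (2 * mm β b * y b)) * W1 b
        + 2 * W1 a * (l * φ * (2 * mm β a * y a) * (2 * mm β b * y b)
            + φ * (2 * mm β b * (if a = b then 1 else 0))) * W1 b
        - W1 a ^ 2 * (l * φ * (2 * mm β b * y b) * (2 * mm β b * y b) + φ * (2 * mm β b * 1))))
      = 2 * φ * (L * G) + 2 * l * φ * (G * G) + 4 * φ * (∑ a, mm β a * W1 a ^ 2)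
        - φ * (N * (l * q + -2 * (n + β))) := by
    have hlq : l * q + -2 * (n + β) = ∑ b, (l * (sg b * (2 * mm β b * y b) ^ 2)
        + sg b * (2 * mm β b)) := by
      rw [Finset.sum_add_distrib, ← Finset.mul_sum, ← hq2, hsm]
    have hdiag : (∑ a, mm β a * W1 a ^ 2) = ∑ a : Option (Fin n), ∑ b : Option (Fin n),
        (if a = b then sg a * sg b * (mm β b * W1 a * W1 b) else 0) := by
      refine Finset.sum_congr rfl fun a _ => ?_
      rw [Finset.sum_ite_eq]
      simp only [Finset.mem_univ, if_true]
      linear_combination - mm β a * W1 a ^ 2 * sg_sq a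
    rw [hlq, hdiag, hL, hG, hN, Finset.sum_mul_sum, Finset.sum_mul_sum, Finset.sum_mul_sum]
    simp only [Finset.mul_sum]
    simp only [← Finset.sum_add_distrib, ← Finset.sum_sub_distrib]
    refine Finset.sum_congr rfl fun a _ => Finset.sum_congr rfl fun b _ => ?_
    split_ifs with h
    · subst h; ring
    · ring
  have S2 : (∑ a, sg a * (W2 a * (φ * A) * W + φ * A * W1 a ^ 2 - 1 / 2 * Baa a * W ^ 2))
      = φ * A * W * L + φ * A * N - 1 / 2 * W ^ 2 * Bs := by
    rw [hL, hN, hBs]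
    simp only [Finset.mul_sum]
    simp only [← Finset.sum_add_distrib, ← Finset.sum_sub_distrib]
    exact Finset.sum_congr rfl fun a _ => by ring
  have S3 : (∑ b, sg b * (2 * (φ ^ 3 * q * (2 * mm β b * y b)) * W * W1 b
        + (3 * l * φ ^ 3 * (2 * mm β b * y b) * q * (2 * mm β b * y b)
            + φ ^ 3 * (8 * sg b * mm β b ^ 2 * y b) * (2 * mm β b * y b)
            + φ ^ 3 * q * (2 * mm β b)) * W ^ 2))
      = 2 * φ ^ 3 * q * W * G + 3 * l * φ ^ 3 * q * W ^ 2 * q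
        + φ ^ 3 * W ^ 2 * (16 * (1 - β) * r2 - 4 * β * q)
        + φ ^ 3 * q * W ^ 2 * (-2 * (n + β)) := by
    rw [← hsq, ← hsm]
    have e : 3 * l * φ ^ 3 * q * W ^ 2 * q
      = 3 * l * φ ^ 3 * q * W ^ 2 * ∑ a, sg a * (2 * mm β a * y a) ^ 2 := by rw [← hq2]
    rw [e, hG]
    simp only [Finset.mul_sum]
    simp only [← Finset.sum_add_distrib]
    exact Finset.sum_congr rfl fun a _ => by ring
  rw [S1, S2, S3, hP1]
  have hA' : (A : ℝ) = l * q - 2 * (n - 1) := hA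
  linear_combination φ * hXN + (φ * N - s ^ 2 * l ^ 2 * φ ^ 3 * q * W ^ 2) * hA'

set_option maxHeartbeats 1000000 in
lemma alg_ineq (β s l φ W q G X A P1 Bs r2 d2 C Ψ U Z M' ν : ℝ)
    (hβ0 : 0 < β) (hβ : β < 1) (hs : 1 ≤ s) (hl : 1 ≤ l) (hφ : l ≤ φ) (hX : 0 ≤ X)
    (hd2 : 0 < d2) (hr : d2 ≤ r2)
    (hBs : |Bs| ≤ C * l ^ 3 * φ)
    (hl2 : 1 ≤ l * ((1 - β) * d2))
    (hs1 : C ≤ 4 * ((1 - β) * d2) * s) (hs2 : 8 ≤ s * ((1 - β) * d2))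
    (hZ : Z = P1 * φ * (2 * G + A * W) + 2 * (1 - β) * φ * X + 2 * l * φ * G ^ 2
      + s ^ 2 * l ^ 2 * φ ^ 3 * W ^ 2 * (2 * l * q ^ 2 - (2 + 6 * β) * q + 16 * (1 - β) * r2)
      - 1 / 2 * Bs * W ^ 2)
    (hA : A = l * q - 2 * (ν - 1))
    (hU : U ≤ 2 * X + 2 * s ^ 2 * l ^ 2 * φ ^ 2 * Ψ * W ^ 2)
    (Q : ℝ) (hΨ : Ψ ≤ Q)
    (hM1 : 1 ≤ M') (hM2 : 2 ≤ M' * (4 * (1 - β)))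
    (hM3 : 2 * Q + 1 ≤ M' * (8 * ((1 - β) * d2))) :
    s * l * (φ * U) + s ^ 3 * l ^ 3 * (φ ^ 3 * W ^ 2) + P1 ^ 2 ≤
      M' * (2 * (P1 - 2 * s * l * φ * G
        - s * l * φ * (l * q - 2 * (ν + β)) * W) ^ 2 + 2 * s * l * Z) := by
  set c := (1 - β) * d2 with hc
  have hc0 : 0 < c := mul_pos (by linarith) hd2
  have hs0 : 0 < s := by linarith
  have hl0 : 0 < l := by linarith
  have hφ1 : 1 ≤ φ := by linarith
  have hφ0 : 0 < φ := by linarith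
  set Y := s ^ 3 * l ^ 3 * φ ^ 3 * W ^ 2 with hY
  have hY0 : 0 ≤ Y := by positivity
  -- zeroth-order coefficient
  have h0 : 8 * c ≤ 2 * l * q ^ 2 - (2 + 6 * β) * q + 16 * (1 - β) * r2 := by
    have h1 : 16 * c ≤ 16 * (1 - β) * r2 := by
      rw [hc]; nlinarith [mul_le_mul_of_nonneg_left hr (by linarith : (0:ℝ) ≤ 1 - β)]
    have h2 : (2 + 6 * β) * q ≤ 8 * |q| := by
      have := le_abs_self q
      have h3 : (2 + 6 * β) * q ≤ (2 + 6 * β) * |q| := by gcongr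
      nlinarith [abs_nonneg q]
    have h4 : 0 ≤ 2 * l * q ^ 2 - 8 * |q| + 8 * c := by
      rw [← sq_abs q]
      have h5 : 0 ≤ l * (2 * l * |q| ^ 2 - 8 * |q| + 8 * c) := by
        nlinarith [sq_nonneg (l * |q| - 2)]
      exact nonneg_of_mul_nonneg_right h5 hl0
    linarith
  have hY1 : 8 * c * Y ≤ s * l * (s ^ 2 * l ^ 2 * φ ^ 3 * W ^ 2 *
      (2 * l * q ^ 2 - (2 + 6 * β) * q + 16 * (1 - β) * r2)) := by
    have := mul_le_mul_of_nonneg_left h0 hY0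
    calc 8 * c * Y = Y * (8 * c) := by ring
      _ ≤ _ := this
      _ = _ := by rw [hY]; ring
  have hs_l : l ≤ φ ^ 2 := by
    calc l ≤ φ := hφ
      _ ≤ φ * φ := le_mul_of_one_le_right hφ0.le hφ1
      _ = φ ^ 2 := by ring
  have hY2 : s * l * (1 / 2 * Bs * W ^ 2) ≤ 2 * c * Y := by
    have h1 : Bs ≤ C * l ^ 3 * φ := (le_abs_self _).trans hBs
    have h2 : C * l ≤ 4 * c * s ^ 2 * φ ^ 2 := by
      have h3 : C * l ≤ (4 * c * s) * φ ^ 2 := by gcongr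
      have h4 : (4 * c * s) * φ ^ 2 ≤ (4 * c * s) * φ ^ 2 * s :=
        le_mul_of_one_le_right (by positivity) hs
      calc C * l ≤ _ := h3
        _ ≤ _ := h4
        _ = _ := by ring
    calc s * l * (1 / 2 * Bs * W ^ 2) ≤ s * l * (1 / 2 * (C * l ^ 3 * φ) * W ^ 2) := by gcongr
      _ = (C * l) * (1 / 2 * s * l ^ 3 * φ * W ^ 2) := by ring
      _ ≤ (4 * c * s ^ 2 * φ ^ 2) * (1 / 2 * s * l ^ 3 * φ * W ^ 2) := by gcongr
      _ = 2 * c * Y := by rw [hY]; ring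
  set R := 2 * (1 + β) * (s * l * φ * W) with hR
  have hY3 : 2 * R ^ 2 ≤ 4 * c * Y := by
    have h1 : (1 + β) ^ 2 ≤ 4 := by nlinarith
    have h2 : 1 ≤ l * φ := one_le_mul_of_one_le_of_one_le hl hφ1
    have h3 : 8 ≤ (s * c) * (l * φ) := by
      calc (8:ℝ) ≤ s * c := hs2
        _ ≤ _ := le_mul_of_one_le_right (by positivity) h2
    calc 2 * R ^ 2 = (1 + β) ^ 2 * (8 * (s * l * φ * W) ^ 2) := by rw [hR]; ring
      _ ≤ 4 * (8 * (s * l * φ * W) ^ 2) := by gcongr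
      _ = 8 * (4 * (s * l * φ * W) ^ 2) := by ring
      _ ≤ ((s * c) * (l * φ)) * (4 * (s * l * φ * W) ^ 2) := by gcongr
      _ = _ := by rw [hY]; ring
  set P2 := - (s * l * φ * (2 * G + A * W)) with hP2
  have hP : P1 - 2 * s * l * φ * G - s * l * φ * (l * q - 2 * (ν + β)) * W = P1 + P2 + R := by
    rw [hP2, hR, hA]; ring
  rw [hP]
  have hlow : P1 ^ 2 + 4 * (1 - β) * (s * l * φ * X) + 8 * c * Y ≤
      2 * (P1 + P2 + R) ^ 2 + 2 * s * l * Z := by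
    have hG : 0 ≤ s * l * (2 * l * φ * G ^ 2) := by positivity
    have hsZ : 2 * s * l * Z = - 2 * P1 * P2 + 4 * (1 - β) * (s * l * φ * X)
      + 2 * (s * l * (2 * l * φ * G ^ 2))
      + 2 * (s * l * (s ^ 2 * l ^ 2 * φ ^ 3 * W ^ 2 *
        (2 * l * q ^ 2 - (2 + 6 * β) * q + 16 * (1 - β) * r2)))
      - 2 * (s * l * (1 / 2 * Bs * W ^ 2)) := by
      rw [hZ, hP2]; ring
    have hsq : P1 ^ 2 + 2 * P1 * P2 ≤ 2 * (P1 + P2 + R) ^ 2 + 2 * R ^ 2 := by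
      nlinarith [sq_nonneg (P1 + P2 + 2 * R), sq_nonneg P2]
    linarith
  have hX0 : 0 ≤ s * l * φ * X := by positivity
  have hup : s * l * (φ * U) ≤ 2 * (s * l * φ * X) + 2 * Q * Y := by
    calc s * l * (φ * U) ≤ s * l * (φ * (2 * X + 2 * s ^ 2 * l ^ 2 * φ ^ 2 * Ψ * W ^ 2)) := by gcongr
      _ ≤ s * l * (φ * (2 * X + 2 * s ^ 2 * l ^ 2 * φ ^ 2 * Q * W ^ 2)) := by gcongr
      _ = _ := by rw [hY]; ring
  have hM0 : 0 ≤ M' := by linarith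
  calc s * l * (φ * U) + s ^ 3 * l ^ 3 * (φ ^ 3 * W ^ 2) + P1 ^ 2
      = s * l * (φ * U) + Y + P1 ^ 2 := by rw [hY]; ring
    _ ≤ 2 * (s * l * φ * X) + (2 * Q + 1) * Y + 1 * P1 ^ 2 := by linarith
    _ ≤ (M' * (4 * (1 - β))) * (s * l * φ * X) + (M' * (8 * c)) * Y + M' * P1 ^ 2 := by gcongr
    _ = M' * (P1 ^ 2 + 4 * (1 - β) * (s * l * φ * X) + 8 * c * Y) := by ring
    _ ≤ _ := by gcongr

/-! ### Weights and transfer -/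

noncomputable def psiV (x₀ : EuclideanSpace ℝ (Fin n)) (β C₀ : ℝ) (p : V n) : ℝ :=
  (∑ a, mm β a * (yy x₀ a p * yy x₀ a p)) + C₀

noncomputable def phV (x₀ : EuclideanSpace ℝ (Fin n)) (β C₀ l : ℝ) (p : V n) : ℝ :=
  Real.exp (l * psiV x₀ β C₀ p)

noncomputable def qV (x₀ : EuclideanSpace ℝ (Fin n)) (β : ℝ) (p : V n) : ℝ :=
  ∑ a, 4 * sg a * mm β a ^ 2 * (yy x₀ a p * yy x₀ a p)

lemma psi_eq (x₀ : EuclideanSpace ℝ (Fin n)) (β C₀ : ℝ) (x : EuclideanSpace ℝ (Fin n)) (t : ℝ) :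
    psi x₀ β C₀ x t = psiV x₀ β C₀ (x, t) := by
  simp only [psi, psiV, Fintype.sum_option, mm, yy, EuclideanSpace.norm_sq_eq, Real.norm_eq_abs,
    sq_abs, PiLp.sub_apply, one_mul]
  simp only [sq]
  ring

lemma phi_eq (x₀ : EuclideanSpace ℝ (Fin n)) (β C₀ l : ℝ) (x : EuclideanSpace ℝ (Fin n)) (t : ℝ) :
    phi x₀ β C₀ l x t = phV x₀ β C₀ l (x, t) := by
  rw [phi, psi_eq, phV]

lemma sm_psiV (x₀ : EuclideanSpace ℝ (Fin n)) (β C₀ : ℝ) : Sm (psiV x₀ β C₀) := by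
  refine ContDiff.add (ContDiff.sum fun a _ => ?_) contDiff_const
  exact contDiff_const.mul ((sm_yy x₀ a).mul (sm_yy x₀ a))

lemma sm_qV (x₀ : EuclideanSpace ℝ (Fin n)) (β : ℝ) : Sm (qV x₀ β) := by
  refine ContDiff.sum fun a _ => ?_
  exact contDiff_const.mul ((sm_yy x₀ a).mul (sm_yy x₀ a))

lemma sm_phV (x₀ : EuclideanSpace ℝ (Fin n)) (β C₀ l : ℝ) : Sm (phV x₀ β C₀ l) :=
  (contDiff_const.mul (sm_psiV x₀ β C₀)).exp

lemma hd_quad (x₀ : EuclideanSpace ℝ (Fin n)) (c : Option (Fin n) → ℝ) (a : Option (Fin n)) :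
    HD a (fun p => ∑ b, c b * (yy x₀ b p * yy x₀ b p)) (fun p => 2 * c a * yy x₀ a p) := by
  refine (HD.sum fun b => (HD.const (c b)).mul ((hd_yy x₀ a b).mul (hd_yy x₀ a b))).congr ?_
  intro p
  rw [Finset.sum_eq_single a]
  · simp; ring
  · intro b _ hb
    simp [hb.symm]
  · simp

lemma hd_psiV (x₀ : EuclideanSpace ℝ (Fin n)) (β C₀ : ℝ) (a : Option (Fin n)) :
    HD a (psiV x₀ β C₀) (fun p => 2 * mm β a * yy x₀ a p) :=
  ((hd_quad x₀ (mm β) a).add (HD.const C₀)).congr fun p => by ring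

lemma hd_qV (x₀ : EuclideanSpace ℝ (Fin n)) (β : ℝ) (a : Option (Fin n)) :
    HD a (qV x₀ β) (fun p => 8 * sg a * mm β a ^ 2 * yy x₀ a p) :=
  (hd_quad x₀ (fun b => 4 * sg b * mm β b ^ 2) a).congr fun p => by ring

lemma hd_phV (x₀ : EuclideanSpace ℝ (Fin n)) (β C₀ l : ℝ) (a : Option (Fin n)) :
    HD a (phV x₀ β C₀ l) (fun p => l * phV x₀ β C₀ l p * (2 * mm β a * yy x₀ a p)) :=
  ((HD.const l).mul (hd_psiV x₀ β C₀ a)).exp.congr fun p => by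
    simp only [phV]; ring

lemma hd_lin (x₀ : EuclideanSpace ℝ (Fin n)) (c : ℝ) (a b : Option (Fin n)) :
    HD a (fun p => c * yy x₀ b p) (fun _ => c * (if a = b then 1 else 0)) :=
  ((HD.const c).mul (hd_yy x₀ a b)).congr fun p => by ring

lemma sm_lin (x₀ : EuclideanSpace ℝ (Fin n)) (c : ℝ) (b : Option (Fin n)) :
    Sm (fun p => c * yy x₀ b p) := contDiff_const.mul (sm_yy x₀ b)

/-! derivatives of the conjugated function -/

lemma hd_w1 (x₀ : EuclideanSpace ℝ (Fin n)) (β C₀ l s : ℝ) {u : V n → ℝ} (hu : Sm u)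
    (a : Option (Fin n)) :
    HD a (fun p => Real.exp (s * phV x₀ β C₀ l p) * u p)
      (fun p => Real.exp (s * phV x₀ β C₀ l p) *
        (D a u p + s * l * phV x₀ β C₀ l p * (2 * mm β a * yy x₀ a p) * u p)) :=
  (((HD.const s).mul (hd_phV x₀ β C₀ l a)).exp.mul (hu.HD a)).congr fun p => by ring

lemma sm_w (x₀ : EuclideanSpace ℝ (Fin n)) (β C₀ l s : ℝ) {u : V n → ℝ} (hu : Sm u) :
    Sm (fun p => Real.exp (s * phV x₀ β C₀ l p) * u p) :=
  (contDiff_const.mul (sm_phV x₀ β C₀ l)).exp.mul hu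

lemma hd_w2 (x₀ : EuclideanSpace ℝ (Fin n)) (β C₀ l s : ℝ) {u : V n → ℝ} (hu : Sm u)
    (a : Option (Fin n)) :
    HD a (fun p => Real.exp (s * phV x₀ β C₀ l p) *
        (D a u p + s * l * phV x₀ β C₀ l p * (2 * mm β a * yy x₀ a p) * u p))
      (fun p => Real.exp (s * phV x₀ β C₀ l p) *
        (D a (D a u) p + 2 * s * l * phV x₀ β C₀ l p * (2 * mm β a * yy x₀ a p) * D a u p
         + (s ^ 2 * l ^ 2 * phV x₀ β C₀ l p ^ 2 * (2 * mm β a * yy x₀ a p) ^ 2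
            + s * l ^ 2 * phV x₀ β C₀ l p * (2 * mm β a * yy x₀ a p) ^ 2
            + s * l * phV x₀ β C₀ l p * (2 * mm β a)) * u p)) :=
  (((HD.const s).mul (hd_phV x₀ β C₀ l a)).exp.mul (((hu.D a).HD a).add
    ((((HD.const (s * l)).mul (hd_phV x₀ β C₀ l a)).mul (hd_lin x₀ (2 * mm β a) a a)).mul
      (hu.HD a)))).congr fun p => by
    simp only [if_true]
    ring

/-! conversions of the operators of the statement -/

lemma deriv_eq_D (hf : Sm f) (x : EuclideanSpace ℝ (Fin n)) (t : ℝ) :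
    deriv (fun t => f (x, t)) t = D none f (x, t) := by
  have h1 : HasFDerivAt f (fderiv ℝ f (x, t)) (x, t) :=
    ((hf.differentiable (by simp)) (x, t)).hasFDerivAt
  have h2 : HasDerivAt (fun t : ℝ => ((x, t) : V n)) (0, 1) t :=
    (hasDerivAt_const t x).prodMk (hasDerivAt_id t)
  exact (h1.comp_hasDerivAt t h2).deriv

lemma fderiv_eq_D (hf : Sm f) (x : EuclideanSpace ℝ (Fin n)) (t : ℝ) (i : Fin n) :
    fderiv ℝ (fun y => f (y, t)) x (EuclideanSpace.single i 1) = D (some i) f (x, t) := by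
  have h1 : HasFDerivAt f (fderiv ℝ f (x, t)) (x, t) :=
    ((hf.differentiable (by simp)) (x, t)).hasFDerivAt
  have h2 : HasFDerivAt (fun y : EuclideanSpace ℝ (Fin n) => ((y, t) : V n)) _ x :=
    (hasFDerivAt_id (𝕜 := ℝ) x).prodMk (hasFDerivAt_const t x)
  have h3 : HasFDerivAt (fun y => f (y, t)) _ x := h1.comp x h2
  rw [h3.fderiv]
  simp [D, ee]

lemma deriv2_eq_D (hf : Sm f) (x : EuclideanSpace ℝ (Fin n)) (t : ℝ) :
    deriv (deriv (fun t => f (x, t))) t = D none (D none f) (x, t) := by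
  have : deriv (fun t => f (x, t)) = fun t => D none f (x, t) := funext (deriv_eq_D hf x)
  rw [this, deriv_eq_D (hf.D none)]

lemma lap_eq_D (hf : Sm f) (x : EuclideanSpace ℝ (Fin n)) (t : ℝ) :
    lap (fun y => f (y, t)) x = ∑ i, D (some i) (D (some i) f) (x, t) := by
  unfold lap
  refine Finset.sum_congr rfl fun i _ => ?_
  simp only [fderiv_eq_D hf]
  rw [fderiv_eq_D (hf.D (some i))]

lemma grad_eq_D (hf : Sm f) (x : EuclideanSpace ℝ (Fin n)) (t : ℝ) :
    ‖gradient (fun y => f (y, t)) x‖ ^ 2 = ∑ i, D (some i) f (x, t) ^ 2 := by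
  rw [EuclideanSpace.norm_sq_eq]
  refine Finset.sum_congr rfl fun i _ => ?_
  rw [Real.norm_eq_abs, sq_abs, ← fderiv_eq_D hf]
  congr 1
  have h : inner ℝ (gradient (fun y => f (y, t)) x) (EuclideanSpace.single i (1:ℝ)) =
      fderiv ℝ (fun y => f (y, t)) x (EuclideanSpace.single i 1) := by
    rw [gradient, InnerProductSpace.toDual_symm_apply]
  rw [← h, EuclideanSpace.inner_single_right]
  simp

lemma box_eq_D (hf : Sm f) (x : EuclideanSpace ℝ (Fin n)) (t : ℝ) :
    deriv (deriv (fun t => f (x, t))) t - lap (fun y => f (y, t)) x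
      = ∑ a, sg a * D a (D a f) (x, t) := by
  rw [deriv2_eq_D hf, lap_eq_D hf, Fintype.sum_option]
  simp [sg, sub_eq_add_neg]

lemma gradsq_eq_D (hf : Sm f) (x : EuclideanSpace ℝ (Fin n)) (t : ℝ) :
    (deriv (fun t => f (x, t)) t) ^ 2 + ‖gradient (fun y => f (y, t)) x‖ ^ 2
      = ∑ a, D a f (x, t) ^ 2 := by
  rw [deriv_eq_D hf, grad_eq_D hf, Fintype.sum_option]

lemma q_eq (x₀ : EuclideanSpace ℝ (Fin n)) (β C₀ : ℝ) (x : EuclideanSpace ℝ (Fin n)) (t : ℝ) :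
    (deriv (psi x₀ β C₀ x) t) ^ 2 - ‖gradient (fun y => psi x₀ β C₀ y t) x‖ ^ 2
      = qV x₀ β (x, t) := by
  have e1 : psi x₀ β C₀ x = fun t => psiV x₀ β C₀ (x, t) := funext (psi_eq x₀ β C₀ x)
  have e2 : (fun y => psi x₀ β C₀ y t) = fun y => psiV x₀ β C₀ (y, t) :=
    funext fun y => psi_eq x₀ β C₀ y t
  have hs := sm_psiV x₀ β C₀
  rw [e1, e2, deriv_eq_D hs, grad_eq_D hs, qV, Fintype.sum_option, sub_eq_add_neg,
    ← Finset.sum_neg_distrib]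
  simp only [(hd_psiV x₀ β C₀ _).D_eq hs, sg]
  congr 1
  · ring
  · exact Finset.sum_congr rfl fun i _ => by ring

lemma P1_eq (x₀ : EuclideanSpace ℝ (Fin n)) (β C₀ s l : ℝ) {w : V n → ℝ} (hw : Sm w)
    (x : EuclideanSpace ℝ (Fin n)) (t : ℝ) :
    P1 x₀ β C₀ s l (fun x t => w (x, t)) x t = (∑ a, sg a * D a (D a w) (x, t))
      + s ^ 2 * l ^ 2 * phV x₀ β C₀ l (x, t) ^ 2 * qV x₀ β (x, t) * w (x, t) := by
  rw [P1, q_eq, phi_eq, box_eq_D hw]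

lemma int_eq {Ω : Set (EuclideanSpace ℝ (Fin n))} {I : Set ℝ} {K : Set (V n)} (hK : IsCompact K)
    (hKΩ : K ⊆ Ω ×ˢ I) (hf : Continuous f) (h : ∀ p, p ∉ K → f p = 0)
    (G : EuclideanSpace ℝ (Fin n) → ℝ → ℝ) (hG : ∀ x t, G x t = f (x, t)) :
    ∫ t in I, ∫ x in Ω, G x t = ∫ p, f p := by
  have hi : Integrable f (volume.prod volume) := integrable_of hK hf h
  have e : ∫ p, f p = ∫ t, ∫ x, f (x, t) := integral_prod_symm f hi
  rw [e]
  have h1 : ∀ t, ∫ x in Ω, G x t = ∫ x, f (x, t) := by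
    intro t
    simp only [hG]
    refine setIntegral_eq_integral_of_forall_compl_eq_zero fun x hx => ?_
    exact h _ fun hp => hx (hKΩ hp).1
  simp only [h1]
  refine setIntegral_eq_integral_of_forall_compl_eq_zero fun t ht => ?_
  have : ∀ x, f (x, t) = 0 := fun x => h _ fun hp => ht (hKΩ hp).2
  simp [this]

/-! ### The divergence term -/

noncomputable def BaaV (x₀ : EuclideanSpace ℝ (Fin n)) (β C₀ l : ℝ) (a : Option (Fin n))
    (p : V n) : ℝ :=
  phV x₀ β C₀ l p * (l ^ 2 * (2 * mm β a * yy x₀ a p) ^ 2 * (l * qV x₀ β p - 2 * (n - 1))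
    + l * (2 * mm β a) * (l * qV x₀ β p - 2 * (n - 1))
    + 2 * l ^ 2 * (2 * mm β a * yy x₀ a p) * (8 * sg a * mm β a ^ 2 * yy x₀ a p)
    + l * (8 * sg a * mm β a ^ 2))

noncomputable def ZV (x₀ : EuclideanSpace ℝ (Fin n)) (β C₀ s l : ℝ) (w : V n → ℝ) (p : V n) : ℝ :=
    (∑ a, ∑ b, sg a * sg b * (2 * D a (D a w) p * (phV x₀ β C₀ l p * (2 * mm β b * yy x₀ b p)) * D b w p
        + 2 * D a w p * (l * phV x₀ β C₀ l p * (2 * mm β a * yy x₀ a p) * (2 * mm β b * yy x₀ b p)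
            + phV x₀ β C₀ l p * (2 * mm β b * (if a = b then 1 else 0))) * D b w p
        - D a w p ^ 2 * (l * phV x₀ β C₀ l p * (2 * mm β b * yy x₀ b p) * (2 * mm β b * yy x₀ b p)
            + phV x₀ β C₀ l p * (2 * mm β b * 1))))
      + (∑ a, sg a * (D a (D a w) p * (phV x₀ β C₀ l p * (l * qV x₀ β p - 2 * (n - 1))) * w p
          + phV x₀ β C₀ l p * (l * qV x₀ β p - 2 * (n - 1)) * D a w p ^ 2
          - 1 / 2 * BaaV x₀ β C₀ l a p * w p ^ 2))
      + s ^ 2 * l ^ 2 * (∑ b, sg b * (2 * (phV x₀ β C₀ l p ^ 3 * qV x₀ β p * (2 * mm β b * yy x₀ b p)) * w p * D b w p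
        + (3 * l * phV x₀ β C₀ l p ^ 3 * (2 * mm β b * yy x₀ b p) * qV x₀ β p * (2 * mm β b * yy x₀ b p)
            + phV x₀ β C₀ l p ^ 3 * (8 * sg b * mm β b ^ 2 * yy x₀ b p) * (2 * mm β b * yy x₀ b p)
            + phV x₀ β C₀ l p ^ 3 * qV x₀ β p * (2 * mm β b)) * w p ^ 2))

lemma sum_int {ι : Type*} [Fintype ι] {c : ι → ℝ} {F : ι → V n → ℝ}
    (h : ∀ i, Integrable (F i) ∧ ∫ p, F i p = 0) :
    Integrable (fun p => ∑ i, c i * F i p) ∧ ∫ p, ∑ i, c i * F i p = 0 := by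
  have hi : ∀ i ∈ (Finset.univ : Finset ι), Integrable (fun p => c i * F i p) :=
    fun i _ => (h i).1.const_mul _
  refine ⟨integrable_finsetSum _ hi, ?_⟩
  rw [integral_finsetSum _ hi]
  refine Finset.sum_eq_zero fun i _ => ?_
  rw [integral_const_mul, (h i).2, mul_zero]

lemma Z_int (x₀ : EuclideanSpace ℝ (Fin n)) (β C₀ s l : ℝ) {w : V n → ℝ} {K : Set (V n)}
    (hK : IsCompact K) (hw : Sm w) (h : ∀ p, p ∉ K → w p = 0) :
    Integrable (ZV x₀ β C₀ s l w) ∧ ∫ p, ZV x₀ β C₀ s l w p = 0 := by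
  have sφ := sm_phV x₀ β C₀ l
  have hφ := hd_phV x₀ β C₀ l
  have sq := sm_qV x₀ β
  have hq := hd_qV x₀ β
  have i1 : ∀ ab : Option (Fin n) × Option (Fin n), _ := fun ab =>
    ibp1 (a := ab.1) (b := ab.2) hK hw h (χ := fun p => phV x₀ β C₀ l p * (2 * mm β ab.2 * yy x₀ ab.2 p))
      (χa := fun p => l * phV x₀ β C₀ l p * (2 * mm β ab.1 * yy x₀ ab.1 p) * (2 * mm β ab.2 * yy x₀ ab.2 p)
            + phV x₀ β C₀ l p * (2 * mm β ab.2 * (if ab.1 = ab.2 then 1 else 0)))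
      (χb := fun p => l * phV x₀ β C₀ l p * (2 * mm β ab.2 * yy x₀ ab.2 p) * (2 * mm β ab.2 * yy x₀ ab.2 p)
            + phV x₀ β C₀ l p * (2 * mm β ab.2 * 1))
      (sφ.mul (sm_lin x₀ _ _))
      ((hφ ab.1).mul (hd_lin x₀ _ _ _))
      (((hφ ab.2).mul (hd_lin x₀ _ _ _)).congr fun p => by simp only [if_true])
  have sA : Sm (fun p => l * qV x₀ β p - 2 * ((n : ℝ) - 1)) :=
    (contDiff_const.mul sq).sub contDiff_const
  have hA : ∀ a, HD a (fun p => l * qV x₀ β p - 2 * ((n : ℝ) - 1))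
      (fun p => l * (8 * sg a * mm β a ^ 2 * yy x₀ a p)) := fun a =>
    (((HD.const l).mul (hq a)).sub (HD.const _)).congr fun p => by ring
  have i2 : ∀ a : Option (Fin n), _ := fun a =>
    ibp2 (a := a) hK hw h (B := fun p => phV x₀ β C₀ l p * (l * qV x₀ β p - 2 * (n - 1)))
      (Ba := fun p => l * phV x₀ β C₀ l p * (2 * mm β a * yy x₀ a p) * (l * qV x₀ β p - 2 * (n - 1))
        + phV x₀ β C₀ l p * (l * (8 * sg a * mm β a ^ 2 * yy x₀ a p)))
      (Baa := BaaV x₀ β C₀ l a)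
      (sφ.mul sA) ((hφ a).mul (hA a))
      ((((contDiff_const.mul sφ).mul (sm_lin x₀ _ _)).mul sA).add
        (sφ.mul (contDiff_const.mul (sm_lin x₀ _ _))))
      ((((((HD.const l).mul (hφ a)).mul (hd_lin x₀ _ _ _)).mul (hA a)).add
        ((hφ a).mul ((HD.const l).mul (hd_lin x₀ _ _ _)))).congr fun p => by
          simp only [if_true, BaaV]; ring)
  have h3 : ∀ a, HD a (fun p => phV x₀ β C₀ l p ^ 3)
      (fun p => 3 * l * phV x₀ β C₀ l p ^ 3 * (2 * mm β a * yy x₀ a p)) := fun a => by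
    have e : (fun p => phV x₀ β C₀ l p ^ 3)
      = fun p => phV x₀ β C₀ l p * (phV x₀ β C₀ l p * phV x₀ β C₀ l p) := by
      funext p; ring
    rw [e]
    exact ((hφ a).mul ((hφ a).mul (hφ a))).congr fun p => by ring
  have i3 : ∀ b : Option (Fin n), _ := fun b =>
    ibp3 (b := b) hK hw h
      (κ := fun p => phV x₀ β C₀ l p ^ 3 * qV x₀ β p * (2 * mm β b * yy x₀ b p))
      (κb := fun p => 3 * l * phV x₀ β C₀ l p ^ 3 * (2 * mm β b * yy x₀ b p) * qV x₀ β p * (2 * mm β b * yy x₀ b p)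
            + phV x₀ β C₀ l p ^ 3 * (8 * sg b * mm β b ^ 2 * yy x₀ b p) * (2 * mm β b * yy x₀ b p)
            + phV x₀ β C₀ l p ^ 3 * qV x₀ β p * (2 * mm β b))
      (((sφ.pow 3).mul sq).mul (sm_lin x₀ _ _))
      ((((h3 b).mul (hq b)).mul (hd_lin x₀ _ _ _)).congr fun p => by
        simp only [if_true]; ring)
  have j1 := sum_int (c := fun ab : Option (Fin n) × Option (Fin n) => sg ab.1 * sg ab.2) i1
  have j2 := sum_int (c := fun a : Option (Fin n) => sg a) i2
  have j3 := sum_int (c := fun a : Option (Fin n) => sg a) i3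
  simp only [Fintype.sum_prod_type] at j1
  have k := (j1.1.add j2.1).add (j3.1.const_mul (s ^ 2 * l ^ 2))
  refine ⟨k, ?_⟩
  have e1 := integral_add (j1.1.add j2.1) (j3.1.const_mul (s ^ 2 * l ^ 2))
  have e2 := integral_add j1.1 j2.1
  rw [integral_const_mul, j3.2] at e1
  rw [j1.2, j2.2] at e2
  refine (Eq.trans ?_ e1).trans ?_
  · rfl
  · simp only [Pi.add_apply]
    rw [e2]; ring

lemma sum_Baa (x₀ : EuclideanSpace ℝ (Fin n)) (β C₀ l : ℝ) (p : V n) :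
    ∑ a, sg a * BaaV x₀ β C₀ l a p = phV x₀ β C₀ l p *
      (l ^ 2 * qV x₀ β p * (l * qV x₀ β p - 2 * (n - 1))
        + l * (-2 * (n + β)) * (l * qV x₀ β p - 2 * (n - 1))
        + 2 * l ^ 2 * (16 * (1 - β) * (∑ i : Fin n, yy x₀ (some i) p ^ 2) - 4 * β * qV x₀ β p)
        + l * (8 * (n + β ^ 2))) := by
  have hsq := sum_qpsi β (fun a => yy x₀ a p)
  have hsm := sum_sg_mm (n := n) β
  have hmm := sum_mm_sq (n := n) β
  have e : qV x₀ β p = ∑ a, 4 * sg a * mm β a ^ 2 * (yy x₀ a p * yy x₀ a p) := rfl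
  rw [← e] at hsq
  rw [← hsq, ← hsm, ← hmm]
  have e' : l ^ 2 * qV x₀ β p * (l * qV x₀ β p - 2 * (n - 1)) = l ^ 2 *
    (∑ a, 4 * sg a * mm β a ^ 2 * (yy x₀ a p * yy x₀ a p)) * (l * qV x₀ β p - 2 * (n - 1)) := by
    rw [← e]
  rw [e']
  simp only [BaaV, Finset.mul_sum, Finset.sum_mul]
  simp only [← Finset.sum_add_distrib]
  rw [Finset.mul_sum]
  refine Finset.sum_congr rfl fun a _ => ?_
  linear_combination (phV x₀ β C₀ l p * (l * (8 * mm β a ^ 2))) * sg_sq a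

lemma Baa_bound (β l φ q r2 ν Q : ℝ) (hβ0 : 0 < β) (hβ : β < 1) (hl : 1 ≤ l) (hφ : 0 < φ)
    (hν : 0 ≤ ν) (hq : |q| ≤ Q) (hr0 : 0 ≤ r2) (hr : 4 * r2 ≤ Q) :
    |φ * (l ^ 2 * q * (l * q - 2 * (ν - 1)) + l * (-2 * (ν + β)) * (l * q - 2 * (ν - 1))
        + 2 * l ^ 2 * (16 * (1 - β) * r2 - 4 * β * q) + l * (8 * (ν + β ^ 2)))|
      ≤ (Q * (Q + 2 * ν + 2) + 2 * (ν + 1) * (Q + 2 * ν + 2) + 16 * Q + 8 * (ν + 1)) * l ^ 3 * φ := by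
  have hl0 : 0 < l := by linarith
  have hQ : 0 ≤ Q := (abs_nonneg q).trans hq
  have hA : |l * q - 2 * (ν - 1)| ≤ l * (Q + 2 * ν + 2) := by
    have h1 : |l * q| ≤ l * Q := by rw [abs_mul, abs_of_pos hl0]; gcongr
    have h2 : |2 * (ν - 1)| ≤ 1 * (2 * ν + 2) := by
      rw [abs_le]; constructor <;> linarith
    have h3 : 1 * (2 * ν + 2) ≤ l * (2 * ν + 2) := by gcongr
    calc _ ≤ |l * q| + |2 * (ν - 1)| := abs_sub _ _
      _ ≤ _ := by linarith
  have t1 : |l ^ 2 * q * (l * q - 2 * (ν - 1))| ≤ l ^ 3 * (Q * (Q + 2 * ν + 2)) := by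
    rw [abs_mul, abs_mul, abs_of_pos (by positivity : 0 < l ^ 2)]
    calc l ^ 2 * |q| * |l * q - 2 * (ν - 1)| ≤ l ^ 2 * Q * (l * (Q + 2 * ν + 2)) := by gcongr
      _ = _ := by ring
  have p1 : 1 ≤ l ^ 2 := one_le_pow₀ hl
  have t2 : |l * (-2 * (ν + β)) * (l * q - 2 * (ν - 1))| ≤
      l ^ 3 * (2 * (ν + 1) * (Q + 2 * ν + 2)) := by
    rw [abs_mul, abs_mul, abs_of_pos hl0]
    have h1 : |-2 * (ν + β)| ≤ 2 * (ν + 1) := by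
      rw [abs_le]; constructor <;> linarith
    calc l * |-2 * (ν + β)| * |l * q - 2 * (ν - 1)|
        ≤ l * (2 * (ν + 1)) * (l * (Q + 2 * ν + 2)) := by gcongr
      _ = l ^ 2 * (2 * (ν + 1) * (Q + 2 * ν + 2)) := by ring
      _ ≤ l ^ 3 * (2 * (ν + 1) * (Q + 2 * ν + 2)) := by
        gcongr
        norm_num
  have t3 : |2 * l ^ 2 * (16 * (1 - β) * r2 - 4 * β * q)| ≤ l ^ 3 * (16 * Q) := by
    rw [abs_mul, abs_of_pos (by positivity : 0 < 2 * l ^ 2)]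
    have h1 : |16 * (1 - β) * r2 - 4 * β * q| ≤ 8 * Q := by
      have h2 : (1 - β) * r2 ≤ 1 * r2 := by gcongr; linarith
      have h3 : 0 ≤ (1 - β) * r2 := mul_nonneg (by linarith) hr0
      have h4 : |β * q| ≤ 1 * Q := by rw [abs_mul, abs_of_pos hβ0]; gcongr
      rw [abs_le] at h4 ⊢
      constructor <;> linarith
    calc 2 * l ^ 2 * |16 * (1 - β) * r2 - 4 * β * q| ≤ 2 * l ^ 2 * (8 * Q) := by gcongr
      _ = l ^ 2 * (16 * Q) := by ring
      _ ≤ l ^ 3 * (16 * Q) := by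
        gcongr
        norm_num
  have t4 : |l * (8 * (ν + β ^ 2))| ≤ l ^ 3 * (8 * (ν + 1)) := by
    rw [abs_of_nonneg (by positivity)]
    have h1 : β ^ 2 ≤ 1 := by nlinarith
    calc l * (8 * (ν + β ^ 2)) ≤ l * (8 * (ν + 1)) := by gcongr
      _ ≤ l * (8 * (ν + 1)) * l ^ 2 := le_mul_of_one_le_right (by positivity) p1
      _ = _ := by ring
  rw [abs_mul, abs_of_pos hφ, mul_comm]
  gcongr
  refine (abs_add_le _ _).trans ((add_le_add ((abs_add_le _ _).trans
    (add_le_add ((abs_add_le _ _).trans (add_le_add t1 t2)) t3)) t4).trans (le_of_eq (by ring)))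

/-! ### Pointwise inequality and conclusion -/

lemma pt (x₀ : EuclideanSpace ℝ (Fin n)) (β C₀ s l d2 Q M' : ℝ) {u : V n → ℝ} (hu : Sm u) (p : V n)
    (hβ0 : 0 < β) (hβ : β < 1) (hs : 1 ≤ s) (hl : 1 ≤ l) (hφ : l ≤ phV x₀ β C₀ l p)
    (hd2 : 0 < d2) (hr : d2 ≤ ∑ i : Fin n, yy x₀ (some i) p ^ 2)
    (hr' : 4 * (∑ i : Fin n, yy x₀ (some i) p ^ 2) ≤ Q)
    (hq : |qV x₀ β p| ≤ Q) (hΨ : ∑ a, (2 * mm β a * yy x₀ a p) ^ 2 ≤ Q)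
    (hl2 : 1 ≤ l * ((1 - β) * d2))
    (hs1 : Q * (Q + 2 * n + 2) + 2 * (n + 1) * (Q + 2 * n + 2) + 16 * Q + 8 * (n + 1)
      ≤ 4 * ((1 - β) * d2) * s) (hs2 : 8 ≤ s * ((1 - β) * d2))
    (hM1 : 1 ≤ M') (hM2 : 2 ≤ M' * (4 * (1 - β)))
    (hM3 : 2 * Q + 1 ≤ M' * (8 * ((1 - β) * d2))) (w : V n → ℝ)
    (hwdef : w = fun p => Real.exp (s * phV x₀ β C₀ l p) * u p) :
    s * l * (phV x₀ β C₀ l p * Real.exp (2 * s * phV x₀ β C₀ l p) * ∑ a, D a u p ^ 2)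
      + s ^ 3 * l ^ 3 * (phV x₀ β C₀ l p ^ 3 * Real.exp (2 * s * phV x₀ β C₀ l p) * u p ^ 2)
      + ((∑ a, sg a * D a (D a w) p)
          + s ^ 2 * l ^ 2 * phV x₀ β C₀ l p ^ 2 * qV x₀ β p * w p) ^ 2
    ≤ M' * (2 * (Real.exp (2 * s * phV x₀ β C₀ l p) * (∑ a, sg a * D a (D a u) p) ^ 2)
        + 2 * s * l * ZV x₀ β C₀ s l w p) := by
  have hw : Sm w := hwdef ▸ sm_w x₀ β C₀ l s hu
  have hw1 : ∀ a, D a w = fun p => Real.exp (s * phV x₀ β C₀ l p) *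
        (D a u p + s * l * phV x₀ β C₀ l p * (2 * mm β a * yy x₀ a p) * u p) := fun a => by
    refine HD.D_eq ?_ hw
    rw [hwdef]; exact hd_w1 x₀ β C₀ l s hu a
  have hw2 : ∀ a, D a (D a w) = _ := fun a => by
    refine HD.D_eq ?_ (hw.D a)
    rw [hw1]; exact hd_w2 x₀ β C₀ l s hu a
  have e1 : ∀ a, D a w p = Real.exp (s * phV x₀ β C₀ l p) *
        (D a u p + s * l * phV x₀ β C₀ l p * (2 * mm β a * yy x₀ a p) * u p) := fun a => by
    rw [hw1]
  have e2 : ∀ a, D a (D a w) p = _ := fun a => congrFun (hw2 a) p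
  have e0 : w p = Real.exp (s * phV x₀ β C₀ l p) * u p := by rw [hwdef]
  have hexp : Real.exp (2 * s * phV x₀ β C₀ l p) = Real.exp (s * phV x₀ β C₀ l p) ^ 2 := by
    rw [← Real.exp_nat_mul]; congr 1; push_cast; ring
  rw [hexp]
  have hφ0 : 0 < phV x₀ β C₀ l p := Real.exp_pos _
  have hid := alg_id β s l (phV x₀ β C₀ l p) (w p) (fun a => yy x₀ a p) (fun a => D a w p)
    (fun a => D a (D a w) p) (qV x₀ β p) _ _ _ _ _ _ rfl rfl rfl rfl rfl rfl
    (fun a => BaaV x₀ β C₀ l a p) rfl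
  have hB := sum_Baa x₀ β C₀ l p
  have hBb := Baa_bound β l (phV x₀ β C₀ l p) (qV x₀ β p) (∑ i : Fin n, yy x₀ (some i) p ^ 2)
      (n : ℝ) Q hβ0 hβ hl hφ0 (by positivity) hq
      (Finset.sum_nonneg fun i _ => sq_nonneg _) hr'
  rw [← hB] at hBb
  have hUle : (∑ a, (Real.exp (s * phV x₀ β C₀ l p) * D a u p) ^ 2) ≤ 2 * (∑ a, D a w p ^ 2)
      + 2 * s ^ 2 * l ^ 2 * phV x₀ β C₀ l p ^ 2 * (∑ a, (2 * mm β a * yy x₀ a p) ^ 2) * w p ^ 2 := by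
    rw [Finset.mul_sum, Finset.mul_sum, Finset.sum_mul, ← Finset.sum_add_distrib]
    refine Finset.sum_le_sum fun a _ => ?_
    have : Real.exp (s * phV x₀ β C₀ l p) * D a u p =
      D a w p - s * l * phV x₀ β C₀ l p * (2 * mm β a * yy x₀ a p) * w p := by
      rw [e1, e0]; ring
    rw [this]
    nlinarith [sq_nonneg (D a w p + s * l * phV x₀ β C₀ l p * (2 * mm β a * yy x₀ a p) * w p)]
  have hmain := alg_ineq β s l (phV x₀ β C₀ l p) (w p) (qV x₀ β p) _ _ _ _ _ _ d2 _ _ _ _ M' n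
    hβ0 hβ hs hl hφ (Finset.sum_nonneg fun a _ => sq_nonneg (D a w p)) hd2 hr hBb hl2 hs1 hs2
    hid rfl hUle Q hΨ hM1 hM2 hM3
  have hP : (∑ a, sg a * D a (D a w) p) + s ^ 2 * l ^ 2 * phV x₀ β C₀ l p ^ 2 * qV x₀ β p * w p
      - 2 * s * l * phV x₀ β C₀ l p * (∑ a, sg a * (2 * mm β a * yy x₀ a p) * D a w p)
      - s * l * phV x₀ β C₀ l p * (l * qV x₀ β p - 2 * (n + β)) * w p
      = Real.exp (s * phV x₀ β C₀ l p) * ∑ a, sg a * D a (D a u) p := by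
    have hq2 : qV x₀ β p = ∑ a, sg a * (2 * mm β a * yy x₀ a p) ^ 2 := by
      rw [qV]; exact Finset.sum_congr rfl fun a _ => by ring
    have hsum : (∑ a, sg a * D a (D a w) p)
      = Real.exp (s * phV x₀ β C₀ l p) * (∑ a, sg a * D a (D a u) p)
      + 2 * s * l * phV x₀ β C₀ l p * (∑ a, sg a * (2 * mm β a * yy x₀ a p) * D a w p)
      + (- s ^ 2 * l ^ 2 * phV x₀ β C₀ l p ^ 2 + s * l ^ 2 * phV x₀ β C₀ l p) * w p
          * (∑ a, sg a * (2 * mm β a * yy x₀ a p) ^ 2)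
      + s * l * phV x₀ β C₀ l p * w p * (∑ a : Option (Fin n), sg a * (2 * mm β a)) := by
      simp only [Finset.mul_sum]
      simp only [← Finset.sum_add_distrib]
      refine Finset.sum_congr rfl fun a _ => ?_
      rw [e2, e1, e0]; ring
    rw [hsum, ← hq2, sum_sg_mm]; ring
  rw [hP] at hmain
  have hL : s * l * (phV x₀ β C₀ l p * Real.exp (s * phV x₀ β C₀ l p) ^ 2 * ∑ a, D a u p ^ 2)
      + s ^ 3 * l ^ 3 * (phV x₀ β C₀ l p ^ 3 * Real.exp (s * phV x₀ β C₀ l p) ^ 2 * u p ^ 2) =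
     s * l * (phV x₀ β C₀ l p * ∑ a, (Real.exp (s * phV x₀ β C₀ l p) * D a u p) ^ 2)
      + s ^ 3 * l ^ 3 * (phV x₀ β C₀ l p ^ 3 * w p ^ 2) := by
    rw [e0]
    simp only [mul_pow, ← Finset.mul_sum]
    ring
  rw [hL, ← mul_pow (Real.exp _) (∑ a, sg a * D a (D a u) p)]
  exact hmain

lemma sum_sq_eq (x₀ : EuclideanSpace ℝ (Fin n)) (p : V n) :
    ∑ i : Fin n, yy x₀ (some i) p ^ 2 = ‖p.1 - x₀‖ ^ 2 := by
  simp only [EuclideanSpace.norm_sq_eq, Real.norm_eq_abs, sq_abs, PiLp.sub_apply, yy]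

lemma qV_eq (x₀ : EuclideanSpace ℝ (Fin n)) (β : ℝ) (p : V n) :
    qV x₀ β p = 4 * (β ^ 2 * p.2 ^ 2) - 4 * ‖p.1 - x₀‖ ^ 2 := by
  rw [← sum_sq_eq, qV, Fintype.sum_option, Finset.mul_sum, sub_eq_add_neg,
    ← Finset.sum_neg_distrib]
  congr 1
  · simp only [sg, mm, yy]; ring
  · refine Finset.sum_congr rfl fun i _ => ?_
    simp only [sg, mm]; ring

lemma Psi_eq (x₀ : EuclideanSpace ℝ (Fin n)) (β : ℝ) (p : V n) :
    ∑ a, (2 * mm β a * yy x₀ a p) ^ 2 = 4 * (β ^ 2 * p.2 ^ 2) + 4 * ‖p.1 - x₀‖ ^ 2 := by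
  rw [← sum_sq_eq, Fintype.sum_option, Finset.mul_sum]
  congr 1
  · simp only [mm, yy]; ring
  · refine Finset.sum_congr rfl fun i _ => ?_
    simp only [mm]; ring

end Carl

open Carl in
/-- **Carleman estimate of Theorem 2.1** specialized to smooth functions compactly supported in
`Ω × (-T,T)`: there exist `λ₀, s₀, M > 0` such that for all `s ≥ s₀`, `λ ≥ λ₀`,
`sλ∫∫ φe^{2sφ}(|∂ₜv|² + |∇v|²) + s³λ³∫∫ φ³e^{2sφ}v² + ∫∫ |P₁(e^{sφ}v)|² ≤ M∫∫ e^{2sφ}|□v|²`. -/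
theorem carleman_compactly_supported
    (n : ℕ) (hn : 1 ≤ n)
    (Ω : Set (EuclideanSpace ℝ (Fin n))) (hΩo : IsOpen Ω) (hΩb : Bornology.IsBounded Ω)
    (T : ℝ) (hT : 0 < T)
    (x₀ : EuclideanSpace ℝ (Fin n)) (hx₀ : x₀ ∉ closure Ω)
    (β : ℝ) (hβ : β ∈ Set.Ioo (0:ℝ) 1) (C₀ : ℝ) (hC₀ : 0 < C₀)
    (hψ : ∀ x ∈ Ω, ∀ t ∈ Set.Ioo (-T) T, 1 ≤ psi x₀ β C₀ x t) :
    ∃ l₀ > (0:ℝ), ∃ s₀ > (0:ℝ), ∃ M > (0:ℝ), ∀ s ≥ s₀, ∀ l ≥ l₀,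
      ∀ v : EuclideanSpace ℝ (Fin n) → ℝ → ℝ,
        ContDiff ℝ (⊤ : ℕ∞) (fun q : EuclideanSpace ℝ (Fin n) × ℝ => v q.1 q.2) →
        (∃ K : Set (EuclideanSpace ℝ (Fin n) × ℝ), IsCompact K ∧ K ⊆ Ω ×ˢ Set.Ioo (-T) T ∧
          ∀ x t, (x, t) ∉ K → v x t = 0) →
        s * l * (∫ t in Set.Ioo (-T) T, ∫ x in Ω,
              phi x₀ β C₀ l x t * Real.exp (2 * s * phi x₀ β C₀ l x t) *
                ((deriv (v x) t) ^ 2 + ‖gradient (fun y => v y t) x‖ ^ 2))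
          + s ^ 3 * l ^ 3 * (∫ t in Set.Ioo (-T) T, ∫ x in Ω,
              (phi x₀ β C₀ l x t) ^ 3 * Real.exp (2 * s * phi x₀ β C₀ l x t) * (v x t) ^ 2)
          + (∫ t in Set.Ioo (-T) T, ∫ x in Ω,
              (P1 x₀ β C₀ s l
                (fun x' t' => Real.exp (s * phi x₀ β C₀ l x' t') * v x' t') x t) ^ 2)
        ≤ M * ∫ t in Set.Ioo (-T) T, ∫ x in Ω,
            Real.exp (2 * s * phi x₀ β C₀ l x t) *
              (deriv (deriv (v x)) t - lap (fun y => v y t) x) ^ 2 := by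
  obtain ⟨hβ0, hβ1⟩ := hβ
  -- geometric constants
  obtain ⟨d, hd, hdist⟩ : ∃ d > (0:ℝ), ∀ x ∈ Ω, d ≤ ‖x - x₀‖ := by
    have h := Metric.mem_closure_iff.not.mp hx₀
    push Not at h
    obtain ⟨d, hd, h⟩ := h
    exact ⟨d, hd, fun x hx => by rw [← dist_eq_norm, dist_comm]; exact h x hx⟩
  obtain ⟨R, hR⟩ : ∃ R : ℝ, ∀ x ∈ Ω, ‖x - x₀‖ ≤ R := by
    obtain ⟨R, hR⟩ := hΩb.subset_closedBall x₀
    exact ⟨R, fun x hx => by rw [← dist_eq_norm]; exact hR hx⟩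
  set d2 := d ^ 2 with hd2
  have hd20 : 0 < d2 := by positivity
  set Q := 4 * (R ^ 2 + T ^ 2) with hQ
  set c := (1 - β) * d2 with hc
  have hc0 : 0 < c := mul_pos (by linarith) hd20
  set C := Q * (Q + 2 * n + 2) + 2 * (n + 1) * (Q + 2 * n + 2) + 16 * Q + 8 * (n + 1) with hC
  have hQ0 : 0 ≤ Q := by positivity
  have hC0' : 0 ≤ C := by positivity
  have hκ : 0 < 1 - β := by linarith
  set M' := 1 + 1 / (2 * (1 - β)) + (2 * Q + 1) / (8 * c) with hM'
  have hM1 : 1 ≤ M' := by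
    have : 0 ≤ 1 / (2 * (1 - β)) + (2 * Q + 1) / (8 * c) := by positivity
    linarith
  have hM2 : 2 ≤ M' * (4 * (1 - β)) := by
    have h1 : 1 / (2 * (1 - β)) ≤ M' := by
      have : 0 ≤ 1 + (2 * Q + 1) / (8 * c) := by positivity
      linarith
    calc (2:ℝ) = 1 / (2 * (1 - β)) * (4 * (1 - β)) := by field_simp; norm_num
      _ ≤ _ := by gcongr
  have hM3 : 2 * Q + 1 ≤ M' * (8 * c) := by
    have h1 : (2 * Q + 1) / (8 * c) ≤ M' := by
      have : 0 ≤ 1 + 1 / (2 * (1 - β)) := by positivity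
      linarith
    calc 2 * Q + 1 = (2 * Q + 1) / (8 * c) * (8 * c) := by field_simp
      _ ≤ _ := by gcongr
  refine ⟨1 + 1 / c, by positivity, 1 + C / (4 * c) + 8 / c, by positivity, 2 * M', by positivity, ?_⟩
  intro s hs l hl v hv ⟨K, hK, hKΩ, hv0⟩
  have hl1 : 1 ≤ l := by
    have : 0 ≤ 1 / c := by positivity
    linarith
  have hs1 : 1 ≤ s := by
    have : 0 ≤ C / (4 * c) + 8 / c := by positivity
    linarith
  have hl2 : 1 ≤ l * c := by
    have h : 1 / c ≤ l := by linarith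
    rwa [div_le_iff₀ hc0] at h
  have hs2 : C ≤ 4 * c * s := by
    have h : C / (4 * c) ≤ s := by
      have : 0 ≤ 8 / c := by positivity
      linarith
    rw [div_le_iff₀ (by positivity)] at h
    linarith
  have hs3 : 8 ≤ s * c := by
    have h : 8 / c ≤ s := by
      have : 0 ≤ C / (4 * c) := by positivity
      linarith
    rwa [div_le_iff₀ hc0] at h
  set u : V n → ℝ := fun q => v q.1 q.2 with hu
  have su : Sm u := hv
  have hu0 : ∀ p, p ∉ K → u p = 0 := fun p hp => hv0 p.1 p.2 hp
  set w : V n → ℝ := fun p => Real.exp (s * phV x₀ β C₀ l p) * u p with hw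
  have sw : Sm w := sm_w x₀ β C₀ l s su
  have hw0 : ∀ p, p ∉ K → w p = 0 := fun p hp => by simp [hw, hu0 p hp]
  have zu := D_zero hK.isClosed hu0
  have zuu := fun a => D_zero hK.isClosed (zu a) a
  have zw := D_zero hK.isClosed hw0
  have zww := fun a => D_zero hK.isClosed (zw a) a
  have cφ : Continuous (phV x₀ β C₀ l) := (sm_phV x₀ β C₀ l).continuous
  have cq : Continuous (qV x₀ β) := (sm_qV x₀ β).continuous
  have cu : Continuous u := su.continuous
  have cw : Continuous w := sw.continuous
  have cDu : ∀ a, Continuous (D a u) := fun a => (su.D a).continuous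
  have cDDu : ∀ a, Continuous (D a (D a u)) := fun a => ((su.D a).D a).continuous
  have cDDw : ∀ a, Continuous (D a (D a w)) := fun a => ((sw.D a).D a).continuous
  let F1 : V n → ℝ := fun p =>
    phV x₀ β C₀ l p * Real.exp (2 * s * phV x₀ β C₀ l p) * ∑ a, D a u p ^ 2
  let F2 : V n → ℝ := fun p =>
    phV x₀ β C₀ l p ^ 3 * Real.exp (2 * s * phV x₀ β C₀ l p) * u p ^ 2
  let F3 : V n → ℝ := fun p => ((∑ a, sg a * D a (D a w) p)
          + s ^ 2 * l ^ 2 * phV x₀ β C₀ l p ^ 2 * qV x₀ β p * w p) ^ 2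
  let F4 : V n → ℝ := fun p =>
    Real.exp (2 * s * phV x₀ β C₀ l p) * (∑ a, sg a * D a (D a u) p) ^ 2
  have c1 : Continuous F1 := by fun_prop
  have c2 : Continuous F2 := by fun_prop
  have c3 : Continuous F3 := by fun_prop
  have c4 : Continuous F4 := by fun_prop
  have z1 : ∀ p, p ∉ K → F1 p = 0 := fun p hp => by simp [F1, zu _ p hp]
  have z2 : ∀ p, p ∉ K → F2 p = 0 := fun p hp => by simp [F2, hu0 p hp]
  have z3 : ∀ p, p ∉ K → F3 p = 0 := fun p hp => by simp [F3, zww _ p hp, hw0 p hp]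
  have z4 : ∀ p, p ∉ K → F4 p = 0 := fun p hp => by simp [F4, zuu _ p hp]
  have zZ : ∀ p, p ∉ K → ZV x₀ β C₀ s l w p = 0 := fun p hp => by
    simp [ZV, zww _ p hp, hw0 p hp, zw _ p hp]
  rw [int_eq hK hKΩ c1 z1 _ (fun x t => by
      simp only [F1, phi_eq]; rw [← gradsq_eq_D su]),
    int_eq hK hKΩ c2 z2 _ (fun x t => by simp only [F2, phi_eq, hu]),
    int_eq hK hKΩ c3 z3 _ (fun x t => by
      simp only [F3]; rw [← P1_eq x₀ β C₀ s l sw]; simp only [hw, hu, phi_eq]),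
    int_eq hK hKΩ c4 z4 _ (fun x t => by
      simp only [F4, phi_eq]; rw [← box_eq_D su])]
  have i1 := integrable_of hK c1 z1
  have i2 := integrable_of hK c2 z2
  have i3 := integrable_of hK c3 z3
  have i4 := integrable_of hK c4 z4
  obtain ⟨iZ, hZ⟩ := Z_int x₀ β C₀ s l hK sw hw0
  have hpt : ∀ p, s * l * F1 p + s ^ 3 * l ^ 3 * F2 p + F3 p ≤
      M' * (2 * F4 p + 2 * s * l * ZV x₀ β C₀ s l w p) := by
    intro p
    by_cases hp : p ∈ K
    · obtain ⟨hx, ht⟩ := hKΩ hp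
      have hb1 := hdist p.1 hx
      have hb2 := hR p.1 hx
      have hb3 : d2 ≤ ‖p.1 - x₀‖ ^ 2 := by rw [hd2]; gcongr
      have hb4 : ‖p.1 - x₀‖ ^ 2 ≤ R ^ 2 := by gcongr
      have hb5 : β ^ 2 * p.2 ^ 2 ≤ T ^ 2 := by
        have h1 : p.2 ^ 2 ≤ T ^ 2 := sq_le_sq' ht.1.le ht.2.le
        have h2 : β ^ 2 ≤ 1 := by nlinarith
        calc β ^ 2 * p.2 ^ 2 ≤ 1 * T ^ 2 := by gcongr
          _ = T ^ 2 := one_mul _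
      have hb6 : 0 ≤ β ^ 2 * p.2 ^ 2 := by positivity
      have hb7 : 0 ≤ ‖p.1 - x₀‖ ^ 2 := by positivity
      have hT2 : 0 ≤ T ^ 2 := by positivity
      refine pt x₀ β C₀ s l d2 Q M' su p hβ0 hβ1 hs1 hl1 ?_ hd20 ?_ ?_ ?_ ?_ hl2 hs2 hs3
        hM1 hM2 hM3 w hw
      · have h := hψ p.1 hx p.2 ht
        rw [psi_eq] at h
        have h2 : l ≤ l * psiV x₀ β C₀ p := le_mul_of_one_le_right (by linarith) h
        have h3 := Real.add_one_le_exp (l * psiV x₀ β C₀ p)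
        unfold phV
        linarith
      · rw [sum_sq_eq]; exact hb3
      · rw [sum_sq_eq]; linarith
      · rw [qV_eq, abs_le]; constructor <;> linarith
      · rw [Psi_eq]; linarith
    · rw [z1 p hp, z2 p hp, z3 p hp, z4 p hp, zZ p hp]; simp
  have hfin := integral_mono (((i1.const_mul (s * l)).add (i2.const_mul (s ^ 3 * l ^ 3))).add i3)
    (((i4.const_mul 2).add (iZ.const_mul (2 * s * l))).const_mul M') hpt
  have j12 : Integrable (fun p => s * l * F1 p + s ^ 3 * l ^ 3 * F2 p) :=
    (i1.const_mul (s * l)).add (i2.const_mul (s ^ 3 * l ^ 3))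
  simp only [Pi.add_apply] at hfin
  have k1 := integral_add j12 i3
  have k2 := integral_add (i1.const_mul (s * l)) (i2.const_mul (s ^ 3 * l ^ 3))
  have k3 := integral_add (i4.const_mul 2) (iZ.const_mul (2 * s * l))
  rw [integral_const_mul, integral_const_mul] at k2 k3
  rw [hZ, mul_zero, add_zero] at k3
  rw [integral_const_mul, k3, k1, k2] at hfin
  linarith
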